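/- Let N ≥ 1, let p > 1 and r ≥ 1 be real numbers, and let A : ℝ^N → ℝ be strictly convex, positively p-homogeneous, and differentiable on ℝ^N. Let t > 0 and let η, η₀ ∈ ℝ^N with η₀ ≠ 0. Then (1/p) · ⟨∇A(η₀), r·t^((r−1)/r) • η − (r−1)·t • η₀⟩ ≤ A(η)^(r/p) · A(η₀)^((p−r)/p). Moreover, if r > 1 and η ≠ t^(1/r) • η₀, the inequality is strict. -/

import Mathlib

open Real
open scoped RealInnerProductSpace

/-!
Since `A` is homogeneous, `A η = A (c • η₀)` for some `c ≥ 0`. By convexity, `∇A(η₀)` attains its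
maximum over the level set of `A` through `c • η₀` at the point `c • η₀`, so
`⟨∇A(η₀), η⟩ ≤ c ⟨∇A(η₀), η₀⟩ = c p A(η₀)`, the last step being Euler's identity. What remains is an
inequality between the numbers `c` and `τ = t ^ (1 / r)`: the graph of `x ↦ x ^ r` lies above its
tangent line at `τ`. All of this holds with a subgradient in place of the gradient.
-/

section RealPower

variable {r x y : ℝ}

theorem rpow_add_mul_sub_eq_rpow_mul (hy : 0 < y) :
    y ^ r + r * y ^ (r - 1) * (x - y) = y ^ r * (1 + r * (x / y - 1)) := by
  rw [rpow_sub_one hy.ne']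
  field_simp

theorem rpow_eq_rpow_mul_one_add_rpow (hx : 0 ≤ x) (hy : 0 < y) :
    x ^ r = y ^ r * (1 + (x / y - 1)) ^ r := by
  rw [add_sub_cancel, div_rpow hx hy.le, mul_div_cancel₀ _ (rpow_pos_of_pos hy r).ne']

theorem rpow_add_mul_sub_le_rpow (hr : 1 ≤ r) (hx : 0 ≤ x) (hy : 0 < y) :
    y ^ r + r * y ^ (r - 1) * (x - y) ≤ x ^ r := by
  rw [rpow_add_mul_sub_eq_rpow_mul hy, rpow_eq_rpow_mul_one_add_rpow hx hy]
  have hxy : -1 ≤ x / y - 1 := by linarith [div_nonneg hx hy.le]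
  gcongr
  exact one_add_mul_self_le_rpow_one_add hxy hr

theorem rpow_add_mul_sub_lt_rpow (hr : 1 < r) (hx : 0 ≤ x) (hy : 0 < y) (hne : x ≠ y) :
    y ^ r + r * y ^ (r - 1) * (x - y) < x ^ r := by
  rw [rpow_add_mul_sub_eq_rpow_mul hy, rpow_eq_rpow_mul_one_add_rpow hx hy]
  have hxy : -1 ≤ x / y - 1 := by linarith [div_nonneg hx hy.le]
  have hxy₀ : x / y - 1 ≠ 0 := by rwa [sub_ne_zero, Ne, div_eq_one_iff_eq hy.ne']
  gcongr
  exact one_add_mul_self_lt_rpow_one_add hxy hxy₀ hr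

end RealPower

section Picone

variable {E : Type*} [AddCommGroup E] [Module ℝ E] {A : E → ℝ} {g : E →ₗ[ℝ] ℝ} {p c : ℝ} {x y : E}

/-- Positive `p`-homogeneity of a real function on a real vector space. The scalar `0` is allowed,
so that `A 0 = 0` as soon as `p ≠ 0`. -/
def IsPosHomogeneous (p : ℝ) (A : E → ℝ) : Prop :=
  ∀ s : ℝ, 0 ≤ s → ∀ ξ : E, A (s • ξ) = s ^ p * A ξ

namespace IsPosHomogeneous

theorem map_zero (hA : IsPosHomogeneous p A) (hp : p ≠ 0) : A 0 = 0 := by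
  simpa [zero_rpow hp] using hA 0 le_rfl 0

theorem pos_of_strictConvexOn (hA : IsPosHomogeneous p A) (hp : 1 < p)
    (hconv : StrictConvexOn ℝ Set.univ A) (hx : x ≠ 0) : 0 < A x := by
  have hmid : (1 / 2 : ℝ) ^ p * A x < 1 / 2 * A x := by
    have hmid₀ := hconv.2 (Set.mem_univ x) (Set.mem_univ 0) hx one_half_pos one_half_pos
      (add_halves 1)
    rwa [smul_zero, add_zero, hA _ one_half_pos.le, hA.map_zero (by linarith), smul_zero, add_zero,
      smul_eq_mul] at hmid₀
  have hpow : (1 / 2 : ℝ) ^ p < 1 / 2 := by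
    simpa using rpow_lt_rpow_of_exponent_gt (x := 1 / 2) (by norm_num) (by norm_num) hp
  exact pos_of_mul_pos_right (a := 1 / 2 - (1 / 2 : ℝ) ^ p) (by linarith) (by linarith)

theorem nonneg_of_strictConvexOn (hA : IsPosHomogeneous p A) (hp : 1 < p)
    (hconv : StrictConvexOn ℝ Set.univ A) (x : E) : 0 ≤ A x := by
  obtain rfl | hx := eq_or_ne x 0
  · exact (hA.map_zero (by linarith)).ge
  · exact (hA.pos_of_strictConvexOn hp hconv hx).le

theorem exists_map_smul_eq (hA : IsPosHomogeneous p A) (hp : p ≠ 0) (hx : 0 < A x)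
    (hy : 0 ≤ A y) : ∃ c : ℝ, 0 ≤ c ∧ A (c • x) = A y := by
  have hratio : 0 ≤ A y / A x := by positivity
  refine ⟨(A y / A x) ^ p⁻¹, by positivity, ?_⟩
  rw [hA _ (by positivity), rpow_inv_rpow hratio hp, div_mul_cancel₀ _ hx.ne']

theorem map_smul_rpow_mul_rpow (hA : IsPosHomogeneous p A) (hp : p ≠ 0) (hx : 0 < A x)
    (hc : 0 ≤ c) (r : ℝ) : A (c • x) ^ (r / p) * A x ^ ((p - r) / p) = c ^ r * A x := by
  have hexp : r / p + (p - r) / p = 1 := by field_simp; ring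
  rw [hA c hc, mul_rpow (by positivity) hx.le, ← rpow_mul hc, mul_div_cancel₀ r hp, mul_assoc,
    ← rpow_add hx, hexp, rpow_one]

end IsPosHomogeneous

/-- `g` is a subgradient of `A` at `x`: the affine function with linear part `g` that agrees with
`A` at `x` is a global minorant of `A`. No topology is involved, so `g` is not required to be
continuous. -/
def IsSubgradientAt (A : E → ℝ) (g : E →ₗ[ℝ] ℝ) (x : E) : Prop :=
  ∀ y, A x + g (y - x) ≤ A y

namespace IsSubgradientAt

theorem of_hasLineDerivAt (hconv : ConvexOn ℝ Set.univ A)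
    (hg : ∀ v, HasLineDerivAt ℝ A (g v) x v) : IsSubgradientAt A g x := by
  intro y
  have hline : ConvexOn ℝ Set.univ fun s : ℝ ↦ A (x + s • (y - x)) := by
    simpa [Function.comp_def, AffineMap.lineMap_apply, add_comm] using
      hconv.comp_affineMap (AffineMap.lineMap x y)
  have hslope := hline.le_slope_of_hasDerivAt (Set.mem_univ 0) (Set.mem_univ 1) one_pos (hg (y - x))
  simp only [slope_def_field, one_smul, zero_smul, add_sub_cancel, add_zero, sub_zero,
    div_one] at hslope
  linarith

theorem lt_of_strictConvexOn (hg : IsSubgradientAt A g x) (hconv : StrictConvexOn ℝ Set.univ A)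
    (hne : y ≠ x) : A x + g (y - x) < A y := by
  have hbelow := hg ((1 / 2 : ℝ) • x + (1 / 2 : ℝ) • y)
  have hmid : A ((1 / 2 : ℝ) • x + (1 / 2 : ℝ) • y) < 1 / 2 * A x + 1 / 2 * A y :=
    hconv.2 (Set.mem_univ x) (Set.mem_univ y) hne.symm one_half_pos one_half_pos (add_halves 1)
  simp only [map_sub, map_add, map_smul, smul_eq_mul] at hbelow ⊢
  linarith

theorem euler_identity (hg : IsSubgradientAt A g x) (hA : IsPosHomogeneous p A) :
    g x = p * A x := by
  have hmin : IsLocalMin (fun s : ℝ ↦ s ^ p * A x - s * g x) 1 := by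
    filter_upwards [lt_mem_nhds one_pos] with s hs
    have hbelow := hg (s • x)
    simp only [hA s hs.le, map_sub, map_smul, smul_eq_mul] at hbelow
    simp only [one_rpow, one_mul]
    linarith
  have hderiv : HasDerivAt (fun s : ℝ ↦ s ^ p * A x - s * g x) (p * A x - g x) 1 := by
    simpa using ((hasDerivAt_rpow_const (x := 1) (p := p) (by simp)).mul_const (A x)).fun_sub
      ((hasDerivAt_id (1 : ℝ)).mul_const (g x))
  linarith [hmin.hasDerivAt_eq_zero hderiv]

theorem apply_lt_apply_smul (hg : IsSubgradientAt A g x) (hA : IsPosHomogeneous p A) (hp : 1 < p)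
    (hconv : StrictConvexOn ℝ Set.univ A) (hc : 0 ≤ c) (hlevel : A (c • x) = A y)
    (hne : y ≠ c • x) : g y < g (c • x) := by
  have hp₀ : p ≠ 0 := by linarith
  obtain rfl | hc := hc.eq_or_lt
  · rw [zero_smul] at hne hlevel
    exact absurd (hlevel.symm.trans (hA.map_zero hp₀)) (hA.pos_of_strictConvexOn hp hconv hne).ne'
  have hlevel' : A (c⁻¹ • y) = A x := by
    rw [hA _ (by positivity), ← hlevel, ← hA _ (by positivity), inv_smul_smul₀ hc.ne']
  have hne' : c⁻¹ • y ≠ x := by rwa [Ne, inv_smul_eq_iff₀ hc.ne']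
  have hneg : c⁻¹ * g y < g x := by
    simpa [hlevel'] using hg.lt_of_strictConvexOn hconv hne'
  simpa using (inv_mul_lt_iff₀ hc).1 hneg

theorem apply_le_apply_smul (hg : IsSubgradientAt A g x) (hA : IsPosHomogeneous p A) (hp : 1 < p)
    (hconv : StrictConvexOn ℝ Set.univ A) (hc : 0 ≤ c) (hlevel : A (c • x) = A y) :
    g y ≤ g (c • x) := by
  obtain rfl | hne := eq_or_ne y (c • x)
  · exact le_rfl
  · exact (hg.apply_lt_apply_smul hA hp hconv hc hlevel hne).le

/-- For strictly convex `A` and `r > 1`, both terms on the right are nonnegative, the first vanishes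
only if `c = τ`, and the second only if `y = c • x`. -/
theorem picone_deficit_eq (hg : IsSubgradientAt A g x) (hA : IsPosHomogeneous p A) (hp : p ≠ 0)
    (hx : 0 < A x) (hc : 0 ≤ c) (hlevel : A (c • x) = A y) {τ : ℝ} (hτ : 0 < τ) (r : ℝ) :
    A y ^ (r / p) * A x ^ ((p - r) / p)
        - (1 / p) * g ((r * τ ^ (r - 1)) • y - ((r - 1) * τ ^ r) • x)
      = (c ^ r - (τ ^ r + r * τ ^ (r - 1) * (c - τ))) * A x
        + r * τ ^ (r - 1) / p * (g (c • x) - g y) := by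
  rw [← hlevel, hA.map_smul_rpow_mul_rpow hp hx hc]
  simp only [map_sub, map_smul, smul_eq_mul, hg.euler_identity hA, rpow_sub_one hτ.ne']
  field_simp
  ring

end IsSubgradientAt

theorem picone_identity_pointwise_vector_form_general {r t : ℝ} {η η₀ : E} (hp : 1 < p)
    (hr : 1 ≤ r) (hconv : StrictConvexOn ℝ Set.univ A) (hhom : IsPosHomogeneous p A)
    (ht : 0 < t) (hη₀ : η₀ ≠ 0) (hg : IsSubgradientAt A g η₀) :
    (1 / p) * g ((r * t ^ ((r - 1) / r)) • η - ((r - 1) * t) • η₀)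
      ≤ A η ^ (r / p) * A η₀ ^ ((p - r) / p) ∧
    (1 < r → η ≠ t ^ (1 / r) • η₀ →
      (1 / p) * g ((r * t ^ ((r - 1) / r)) • η - ((r - 1) * t) • η₀)
        < A η ^ (r / p) * A η₀ ^ ((p - r) / p)) := by
  have hp₀ : 0 < p := by linarith
  have hr₀ : 0 < r := by linarith
  have hA₀ : 0 < A η₀ := hhom.pos_of_strictConvexOn hp hconv hη₀
  obtain ⟨c, hc, hlevel⟩ :=
    hhom.exists_map_smul_eq hp₀.ne' hA₀ (hhom.nonneg_of_strictConvexOn hp hconv η)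
  obtain ⟨τ, hτ, rfl⟩ : ∃ τ : ℝ, 0 < τ ∧ τ ^ r = t :=
    ⟨t ^ r⁻¹, by positivity, rpow_inv_rpow ht.le hr₀.ne'⟩
  have hroot : (τ ^ r) ^ (1 / r) = τ := by rw [one_div, rpow_rpow_inv hτ.le hr₀.ne']
  have hpow : (τ ^ r) ^ ((r - 1) / r) = τ ^ (r - 1) := by
    rw [← rpow_mul hτ.le, mul_div_cancel₀ _ hr₀.ne']
  have hcoeff : 0 < r * τ ^ (r - 1) / p := by positivity
  have hscalar := mul_nonneg (sub_nonneg.2 (rpow_add_mul_sub_le_rpow hr hc hτ)) hA₀.le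
  have hlinear := mul_nonneg hcoeff.le
    (sub_nonneg.2 (hg.apply_le_apply_smul hhom hp hconv hc hlevel))
  rw [hroot, hpow]
  refine ⟨sub_nonneg.1 ?_, fun hr₁ hne ↦ sub_pos.1 ?_⟩ <;>
    rw [hg.picone_deficit_eq hhom hp₀.ne' hA₀ hc hlevel hτ]
  · exact add_nonneg hscalar hlinear
  · obtain rfl | hcτ := eq_or_ne c τ
    · exact add_pos_of_nonneg_of_pos hscalar <|
        mul_pos hcoeff (sub_pos.2 (hg.apply_lt_apply_smul hhom hp hconv hc hlevel hne))
    · exact add_pos_of_pos_of_nonneg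
        (mul_pos (sub_pos.2 (rpow_add_mul_sub_lt_rpow hr₁ hc hτ hcτ)) hA₀) hlinear

end Picone

theorem picone_identity_pointwise_vector_form
    (N : ℕ) (hN : 1 ≤ N) (p r : ℝ) (hp : 1 < p) (hr : 1 ≤ r)
    (A : EuclideanSpace ℝ (Fin N) → ℝ)
    (hconv : StrictConvexOn ℝ Set.univ A)
    (hhom : ∀ s : ℝ, 0 ≤ s → ∀ ξ : EuclideanSpace ℝ (Fin N), A (s • ξ) = s ^ p * A ξ)
    (hdiff : Differentiable ℝ A)
    (t : ℝ) (ht : 0 < t)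
    (η η₀ : EuclideanSpace ℝ (Fin N)) (hη₀ : η₀ ≠ 0) :
    (1/p) * ⟪gradient A η₀, (r * t ^ ((r - 1)/r)) • η - ((r - 1) * t) • η₀⟫
      ≤ (A η) ^ (r/p) * (A η₀) ^ ((p - r)/p) ∧
    (1 < r → η ≠ t ^ (1/r) • η₀ →
      (1/p) * ⟪gradient A η₀, (r * t ^ ((r - 1)/r)) • η - ((r - 1) * t) • η₀⟫
        < (A η) ^ (r/p) * (A η₀) ^ ((p - r)/p)) :=
  picone_identity_pointwise_vector_form_general (g := innerₗ _ (gradient A η₀)) hp hr hconv hhom ht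
    hη₀ (.of_hasLineDerivAt hconv.convexOn (hdiff η₀).hasGradientAt.hasFDerivAt.hasLineDerivAt)
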